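/- arXiv:2312.07773 — 2 statements merged into one kernel-verified Lean document; each statement's English description precedes it below -/
import Mathlib

section
/- Fix real ε > 0 and r > 0, and define t_n = ε^{2n} (4n)! / (2^{4n} (2n)! r^{2n}) for n ∈ ℕ. If N ∈ ℕ is a global minimizer of the sequence (t_n), i.e. t_N ≤ t_n for all n ∈ ℕ, then |N - r/(2ε)| ≤ 1. In particular the optimal truncation point of the asymptotic series satisfies N_opt = r/(2ε) + O(1). -/
/-!
With `x = r / (2ε)`, consecutive terms satisfy
`t (n + 1) / t n = (n + 1/4) (n + 3/4) / x ^ 2`, and `(n + 1/4) (n + 3/4)` lies between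
`(n + 1/4) ^ 2` and `(n + 1/2) ^ 2`. So the terms can grow at step `n` only if `x ≤ n + 1/2`, and
can shrink only if `n + 1/4 ≤ x`; at a local minimum `N` the first holds for `n = N` and the second
for `n = N - 1`.
-/

/-- The modulus `t_n` of the `n`-th term of the divergent series at a point at distance `r` from
the singularity. The scalars may lie in any field, since only field operations occur. -/
def termModulus {K : Type*} [Field K] (ε r : K) (n : ℕ) : K :=
  ε ^ (2 * n) * (Nat.factorial (4 * n) : K) /
    (2 ^ (4 * n) * (Nat.factorial (2 * n) : K) * r ^ (2 * n))

section Recurrence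

variable {K : Type*} [Field K]

theorem termModulus_eq_factorial_div_mul_pow (ε r : K) (n : ℕ) :
    termModulus ε r n =
      ((2 * (2 * n)).factorial / (2 * n).factorial : K) * (ε / (2 ^ 2 * r)) ^ (2 * n) := by
  rw [termModulus, div_pow, mul_pow, ← pow_mul, ← mul_assoc 2 2 n, div_mul_div_comm]
  ring_nf

variable [CharZero K]

theorem factorial_two_mul_div_factorial_succ (m : ℕ) :
    ((2 * (m + 1)).factorial / (m + 1).factorial : K) =
      2 * (2 * m + 1) * ((2 * m).factorial / m.factorial) := by
  have hfact : (m.factorial : K) ≠ 0 := mod_cast m.factorial_ne_zero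
  have hsucc : (m + 1 : K) ≠ 0 := mod_cast m.succ_ne_zero
  rw [show 2 * (m + 1) = 2 * m + 1 + 1 by ring]
  simp only [Nat.factorial_succ]
  push_cast
  field_simp
  ring

theorem termModulus_succ (ε r : K) (n : ℕ) :
    termModulus ε r (n + 1) =
      (n + 1 / 4) * (n + 3 / 4) / (r / (2 * ε)) ^ 2 * termModulus ε r n := by
  rw [termModulus_eq_factorial_div_mul_pow, termModulus_eq_factorial_div_mul_pow,
    show 2 * (n + 1) = 2 * n + 1 + 1 by ring, factorial_two_mul_div_factorial_succ,
    factorial_two_mul_div_factorial_succ, pow_add, pow_add]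
  push_cast
  field_simp
  ring

end Recurrence

section Ordered

variable {K : Type*} [Field K] [LinearOrder K] [IsStrictOrderedRing K] {ε r : K}

theorem termModulus_pos (hε : 0 < ε) (hr : 0 < r) (n : ℕ) : 0 < termModulus ε r n := by
  unfold termModulus
  positivity

theorem le_add_half_of_termModulus_le_succ (hε : 0 < ε) (hr : 0 < r) {n : ℕ}
    (h : termModulus ε r n ≤ termModulus ε r (n + 1)) : r / (2 * ε) ≤ n + 1 / 2 := by
  rw [termModulus_succ, le_mul_iff_one_le_left (termModulus_pos hε hr n),
    one_le_div (by positivity)] at h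
  refine le_of_sq_le_sq ?_ (by positivity)
  calc (r / (2 * ε)) ^ 2 ≤ (n + 1 / 4) * (n + 3 / 4) := h
    _ ≤ (n + 1 / 2) ^ 2 := by linarith

theorem add_quarter_le_of_termModulus_succ_le (hε : 0 < ε) (hr : 0 < r) {n : ℕ}
    (h : termModulus ε r (n + 1) ≤ termModulus ε r n) : n + 1 / 4 ≤ r / (2 * ε) := by
  rw [termModulus_succ, mul_le_iff_le_one_left (termModulus_pos hε hr n),
    div_le_one (by positivity)] at h
  refine le_of_sq_le_sq ?_ (by positivity)
  calc (n + 1 / 4 : K) ^ 2 = (n + 1 / 4) * (n + 1 / 4) := sq _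
    _ ≤ (n + 1 / 4) * (n + 3 / 4) := by gcongr; norm_num
    _ ≤ (r / (2 * ε)) ^ 2 := h

theorem optimal_truncation_location_general (hε : 0 < ε) (hr : 0 < r) {N : ℕ}
    (hsucc : termModulus ε r N ≤ termModulus ε r (N + 1))
    (hpred : ∀ M, N = M + 1 → termModulus ε r N ≤ termModulus ε r M) :
    |(N : K) - r / (2 * ε)| ≤ 3 / 4 := by
  have upper : r / (2 * ε) ≤ N + 1 / 2 := le_add_half_of_termModulus_le_succ hε hr hsucc
  have lower : (N : K) - 3 / 4 ≤ r / (2 * ε) := by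
    rcases N with _ | M
    · have hpos : 0 < r / (2 * ε) := by positivity
      push_cast
      linarith
    · have := add_quarter_le_of_termModulus_succ_le hε hr (hpred M rfl)
      push_cast
      linarith
  rw [abs_le]
  constructor <;> linarith

end Ordered

/-- A global minimizer `N` of the term moduli `t_n = ε^{2n}(4n)!/(2^{4n}(2n)! r^{2n})`
of the divergent asymptotic series satisfies `|N - r/(2ε)| ≤ 1`, i.e. the optimal
truncation point is `N_opt = r/(2ε) + O(1)`. -/
theorem optimal_truncation_location (ε r : ℝ) (hε : 0 < ε) (hr : 0 < r)
    (t : ℕ → ℝ)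
    (ht : ∀ n : ℕ, t n = ε ^ (2 * n) * (Nat.factorial (4 * n) : ℝ) /
      (2 ^ (4 * n) * (Nat.factorial (2 * n) : ℝ) * r ^ (2 * n)))
    (N : ℕ) (hN : ∀ n : ℕ, t N ≤ t n) :
    |(N : ℝ) - r / (2 * ε)| ≤ 1 := by
  obtain rfl : t = termModulus ε r := funext ht
  exact (optimal_truncation_location_general hε hr (hN _) fun M _ => hN M).trans (by norm_num)
end

section
/- Let r > 0. For any sequence (ε_k) of positive reals with ε_k → 0 and any sequence (N_k) of natural numbers with 0 ≤ N_k - r/(2 ε_k) < 1 for all k, one has lim_{k→∞} e^{r/ε_k} · ε_k^{2 N_k} (4 N_k)! / (2^{4 N_k} (2 N_k)! · r^{2 N_k}) = √2. That is, at the optimal truncation point N = r/(2ε) + ω with ω ∈ [0,1), the optimally truncated term ε^{2N} (4N)!/(2^{4N}(2N)! r^{2N}) is asymptotic to √2 · e^{-r/ε} as ε → 0, independently of ω. -/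
open Filter

/-!
Put `n = 2N` and `y = r / ε`, so that the rescaled term is `exp y * ((2n)! / (4 ^ n * n!)) / y ^ n`.
Stirling's formula gives `(2n)! / (4 ^ n * n!) ~ √2 * (n / e) ^ n`, and what remains is
`exp y * (n / e) ^ n / y ^ n = exp (y * klFun (n / y))` with `klFun u = u * log u + 1 - u`.
Since `0 ≤ klFun u ≤ (u - 1) ^ 2`, the exponent is at most `(n - y) ^ 2 / y`. This tends to `0` as
soon as `n - y = o(√y)`, so the exact offset of `n` from the optimal point `y` does not matter.
-/

open Asymptotics InformationTheory
open scoped Nat Topology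

theorem isEquivalent_factorial_two_mul_div_four_pow_mul_factorial :
    (fun n : ℕ ↦ ((2 * n)! / (4 ^ n * n !) : ℝ)) ~[atTop]
      fun n ↦ √2 * (n / Real.exp 1) ^ n := by
  have stirling := Stirling.factorial_isEquivalent_stirling
  have stirling_two_mul :=
    stirling.comp_tendsto (tendsto_id.const_mul_atTop' (zero_lt_two' ℕ))
  refine (stirling_two_mul.div (IsEquivalent.refl.mul stirling)).congr_right ?_
  filter_upwards [eventually_gt_atTop 0] with n hn
  have sqrt_eq : √(2 * ((2 * n : ℕ) : ℝ) * Real.pi) = √2 * √(2 * n * Real.pi) := by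
    rw [← Real.sqrt_mul zero_le_two]
    push_cast
    ring_nf
  have pow_eq : (((2 * n : ℕ) : ℝ) / Real.exp 1) ^ (2 * n) =
      4 ^ n * ((n / Real.exp 1) ^ n * (n / Real.exp 1) ^ n) := by
    rw [pow_mul, ← mul_pow, ← mul_pow]
    push_cast
    ring
  simp only [Pi.div_apply, Pi.mul_apply, Function.comp_apply, id, sqrt_eq, pow_eq]
  field_simp

theorem klFun_le_sub_one_sq {u : ℝ} (hu : 0 ≤ u) : klFun u ≤ (u - 1) ^ 2 := by
  rcases hu.eq_or_lt with rfl | hu_pos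
  · norm_num [klFun_zero]
  have mul_log_le : u * Real.log u ≤ u * (u - 1) :=
    mul_le_mul_of_nonneg_left (Real.log_le_sub_one_of_pos hu_pos) hu
  rw [klFun_apply]
  linarith

theorem exp_mul_div_exp_one_pow_div_pow_eq_exp_mul_klFun (n : ℕ) {y : ℝ} (hy : 0 < y) :
    Real.exp y * ((n / Real.exp 1) ^ n / y ^ n) = Real.exp (y * klFun (n / y)) := by
  rcases n.eq_zero_or_pos with rfl | hn
  · simp [klFun_zero]
  have div_pow_eq : (n / y : ℝ) ^ n = Real.exp (n * Real.log (n / y)) := by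
    rw [Real.exp_nat_mul, Real.exp_log (by positivity)]
  calc Real.exp y * ((n / Real.exp 1) ^ n / y ^ n)
      = Real.exp y * ((n / y) ^ n / Real.exp 1 ^ n) := by simp only [div_pow, div_right_comm]
    _ = Real.exp (y + (n * Real.log (n / y) - n)) := by
        rw [div_pow_eq, Real.exp_one_pow, ← Real.exp_sub, ← Real.exp_add]
    _ = Real.exp (y * klFun (n / y)) := by
        rw [klFun_apply]
        field_simp
        ring_nf

section Tendsto

variable {ι : Type*} {l : Filter ι} {n : ι → ℕ} {y : ι → ℝ}

theorem tendsto_atTop_of_tendsto_sub_sq_div (hy : Tendsto y l atTop)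
    (hny : Tendsto (fun i ↦ (n i - y i) ^ 2 / y i) l (𝓝 0)) : Tendsto n l atTop := by
  rw [← tendsto_natCast_atTop_iff (R := ℝ)]
  refine tendsto_atTop_mono' l ?_ ((hy.atTop_add hny.neg).atTop_div_const zero_lt_two)
  filter_upwards [hy.eventually_gt_atTop 0] with i hi
  have expand_sq : (n i - y i) ^ 2 / y i = n i ^ 2 / y i - 2 * n i + y i := by
    field_simp
    ring
  have sq_div_nonneg : (0 : ℝ) ≤ n i ^ 2 / y i := by positivity
  linarith

theorem tendsto_exp_mul_div_exp_one_pow_div_pow (hy : ∀ᶠ i in l, 0 < y i)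
    (hny : Tendsto (fun i ↦ (n i - y i) ^ 2 / y i) l (𝓝 0)) :
    Tendsto (fun i ↦ Real.exp (y i) * ((n i / Real.exp 1) ^ n i / y i ^ n i)) l (𝓝 1) := by
  have exponent_nonneg : ∀ᶠ i in l, 0 ≤ y i * klFun (n i / y i) := by
    filter_upwards [hy] with i hi
    exact mul_nonneg hi.le (klFun_nonneg (by positivity))
  have exponent_le : ∀ᶠ i in l, y i * klFun (n i / y i) ≤ (n i - y i) ^ 2 / y i := by
    filter_upwards [hy] with i hi
    calc y i * klFun (n i / y i) ≤ y i * (n i / y i - 1) ^ 2 := by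
          gcongr
          exact klFun_le_sub_one_sq (by positivity)
      _ = (n i - y i) ^ 2 / y i := by field_simp
  have exponent_tendsto := squeeze_zero' exponent_nonneg exponent_le hny
  have limit := exponent_tendsto.rexp
  rw [Real.exp_zero] at limit
  refine limit.congr' ?_
  filter_upwards [hy] with i hi
  exact (exp_mul_div_exp_one_pow_div_pow_eq_exp_mul_klFun (n i) hi).symm

theorem tendsto_exp_mul_factorial_two_mul_div (hy : Tendsto y l atTop)
    (hny : Tendsto (fun i ↦ (n i - y i) ^ 2 / y i) l (𝓝 0)) :
    Tendsto (fun i ↦ Real.exp (y i) * ((2 * n i)! / (4 ^ n i * (n i)!) / y i ^ n i)) l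
      (𝓝 √2) := by
  have stirling := isEquivalent_factorial_two_mul_div_four_pow_mul_factorial.comp_tendsto
    (tendsto_atTop_of_tendsto_sub_sq_div hy hny)
  have limit :=
    (tendsto_exp_mul_div_exp_one_pow_div_pow (hy.eventually_gt_atTop 0) hny).const_mul √2
  rw [mul_one] at limit
  have equiv := (IsEquivalent.refl (u := fun i ↦ Real.exp (y i))).mul
    (stirling.div (IsEquivalent.refl (u := fun i ↦ y i ^ n i)))
  refine equiv.symm.tendsto_nhds (limit.congr fun i ↦ ?_)
  simp only [Pi.mul_apply, Pi.div_apply, Function.comp_apply]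
  ring

end Tendsto

theorem optimally_truncated_term_general {ι : Type*} {l : Filter ι} {r : ℝ} (hr : 0 < r)
    {ε : ι → ℝ} (hε : Tendsto ε l (𝓝[>] 0)) {N : ι → ℕ}
    (hN : Tendsto (fun k ↦ (N k - r / (2 * ε k)) ^ 2 * ε k) l (𝓝 0)) :
    Tendsto (fun k ↦ Real.exp (r / ε k) * (ε k ^ (2 * N k) * (4 * N k)! /
      (2 ^ (4 * N k) * (2 * N k)! * r ^ (2 * N k)))) l (𝓝 √2) := by
  have ε_pos : ∀ᶠ k in l, 0 < ε k := hε.eventually self_mem_nhdsWithin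
  have ratio_atTop : Tendsto (fun k ↦ r / ε k) l atTop :=
    hε.inv_tendsto_nhdsGT_zero.const_mul_atTop hr
  have offset : Tendsto (fun k ↦ ((2 * N k : ℕ) - r / ε k) ^ 2 / (r / ε k)) l (𝓝 0) := by
    have scaled := hN.const_mul (4 / r)
    rw [mul_zero] at scaled
    refine scaled.congr' ?_
    filter_upwards [ε_pos] with k hk
    push_cast
    field_simp
    ring
  refine (tendsto_exp_mul_factorial_two_mul_div ratio_atTop offset).congr fun k ↦ ?_
  have four_mul : 4 * N k = 2 * (2 * N k) := by ring
  have two_pow : (2 : ℝ) ^ (2 * (2 * N k)) = 4 ^ (2 * N k) := by norm_num [pow_mul]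
  rw [four_mul, two_pow, div_pow]
  field_simp

/-- At the optimal truncation point `N = r/(2ε) + ω`, `ω ∈ [0,1)`, the optimally
truncated term `ε^{2N}(4N)!/(2^{4N}(2N)! r^{2N})` is asymptotic to `√2 e^{-r/ε}`
as `ε → 0`, independently of `ω`. -/
theorem optimally_truncated_term (r : ℝ) (hr : 0 < r)
    (ε : ℕ → ℝ) (hε : ∀ k, 0 < ε k) (hε0 : Tendsto ε atTop (nhds 0))
    (N : ℕ → ℕ)
    (hN : ∀ k, 0 ≤ (N k : ℝ) - r / (2 * ε k) ∧ (N k : ℝ) - r / (2 * ε k) < 1) :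
    Tendsto (fun k =>
      Real.exp (r / ε k) * ((ε k) ^ (2 * N k) * (Nat.factorial (4 * N k) : ℝ) /
        (2 ^ (4 * N k) * (Nat.factorial (2 * N k) : ℝ) * r ^ (2 * N k))))
      atTop (nhds (Real.sqrt 2)) :=
  optimally_truncated_term_general hr
    (tendsto_nhdsWithin_iff.2 ⟨hε0, .of_forall hε⟩)
    (squeeze_zero (fun k ↦ mul_nonneg (sq_nonneg _) (hε k).le)
      (fun k ↦ mul_le_of_le_one_left (hε k).le (pow_le_one₀ (hN k).1 (hN k).2.le)) hε0)
end
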